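/- Let M ⊆ ℝ^n × ℝ^n × ℝ^m × ℝ^m (elements written (f_S, e_S, y, u), with flows (f_S, y) and efforts (e_S, u)) be a maximal monotone relation. Assume (s1) 0 ∈ rint Π(M, F_S) (the projection onto the f_S-component), and (s2) there exists ē ∈ rint {e_S : (0, e_S) ∈ Π(M, F_S × E_S)}. Then the steady-state relation M_s := {(y, u) : there exists e_S with (0, e_S, y, u) ∈ M} is a maximal monotone relation in ℝ^m × ℝ^m. -/

import Mathlib

/-- The duality pairing (standard inner product) on `ℝ^n`. -/
noncomputable def dot {n : ℕ} (e f : Fin n → ℝ) : ℝ := ∑ i, e i * f i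

/-- Monotone relation with elements `(f_S, e_S, y, u)`, flows `(f_S, y)` and
efforts `(e_S, u)`. -/
def MonoPH {n m : ℕ}
    (M : Set ((Fin n → ℝ) × (Fin n → ℝ) × (Fin m → ℝ) × (Fin m → ℝ))) : Prop :=
  ∀ fS eS y u fS' eS' y' u',
    (fS, eS, y, u) ∈ M → (fS', eS', y', u') ∈ M →
    0 ≤ dot (eS - eS') (fS - fS') + dot (u - u') (y - y')

/-- Maximal monotone relation (elements `(f_S, e_S, y, u)`). -/
def MaxMonoPH {n m : ℕ}
    (M : Set ((Fin n → ℝ) × (Fin n → ℝ) × (Fin m → ℝ) × (Fin m → ℝ))) : Prop :=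
  MonoPH M ∧ ∀ M', MonoPH M' → M ⊆ M' → M' = M

/-- Monotone relation `M ⊆ Y × U` with elements `(y, u)` (flow `y`, effort `u`). -/
def Mono2 {m : ℕ} (M : Set ((Fin m → ℝ) × (Fin m → ℝ))) : Prop :=
  ∀ p ∈ M, ∀ q ∈ M, 0 ≤ dot (p.2 - q.2) (p.1 - q.1)

/-- Maximal monotone relation in `Y × U`. -/
def MaxMono2 {m : ℕ} (M : Set ((Fin m → ℝ) × (Fin m → ℝ))) : Prop :=
  Mono2 M ∧ ∀ M', Mono2 M' → M ⊆ M' → M' = M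

/-- Relative interior `rint S := rint (cl S)`. -/
noncomputable def rint {V : Type*} [AddCommGroup V] [Module ℝ V] [TopologicalSpace V]
    (S : Set V) : Set V :=
  intrinsicInterior ℝ (closure S)

namespace SteadyAux

lemma dot_add_left {n : ℕ} (a b c : Fin n → ℝ) : dot (a + b) c = dot a c + dot b c := by
  simp [dot, add_mul, Finset.sum_add_distrib]

lemma dot_sub_left {n : ℕ} (a b c : Fin n → ℝ) : dot (a - b) c = dot a c - dot b c := by
  simp [dot, sub_mul, Finset.sum_sub_distrib]

lemma dot_smul_left {n : ℕ} (t : ℝ) (a c : Fin n → ℝ) : dot (t • a) c = t * dot a c := by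
  simp [dot, Finset.mul_sum, mul_assoc]

lemma dot_comm {n : ℕ} (a c : Fin n → ℝ) : dot a c = dot c a := by
  simp [dot, mul_comm]

lemma dot_add_right {n : ℕ} (a b c : Fin n → ℝ) : dot c (a + b) = dot c a + dot c b := by
  simp [dot, mul_add, Finset.sum_add_distrib]

lemma dot_sub_right {n : ℕ} (a b c : Fin n → ℝ) : dot c (a - b) = dot c a - dot c b := by
  simp [dot, mul_sub, Finset.sum_sub_distrib]

lemma dot_smul_right {n : ℕ} (t : ℝ) (a c : Fin n → ℝ) : dot c (t • a) = t * dot c a := by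
  rw [dot_comm, dot_smul_left, dot_comm]

lemma dot_self_nonneg {n : ℕ} (a : Fin n → ℝ) : 0 ≤ dot a a :=
  Finset.sum_nonneg fun i _ => mul_self_nonneg (a i)

lemma dot_self_eq_zero {n : ℕ} {a : Fin n → ℝ} (h : dot a a ≤ 0) : a = 0 := by
  have h0 : dot a a = 0 := le_antisymm h (dot_self_nonneg a)
  unfold dot at h0
  rw [Finset.sum_eq_zero_iff_of_nonneg (fun i _ => mul_self_nonneg (a i))] at h0
  funext i
  simpa using h0 i (Finset.mem_univ i)

lemma continuous_dot {X : Type*} [TopologicalSpace X] {n : ℕ} {a b : X → Fin n → ℝ}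
    (ha : Continuous a) (hb : Continuous b) : Continuous fun x => dot (a x) (b x) := by
  unfold dot
  fun_prop

lemma sq_le_dot_self {n : ℕ} (a : Fin n → ℝ) (i : Fin n) : a i * a i ≤ dot a a :=
  Finset.single_le_sum (f := fun i => a i * a i) (fun i _ => mul_self_nonneg (a i))
    (Finset.mem_univ i)

lemma norm_le_dot_self {n : ℕ} (a : Fin n → ℝ) : ‖a‖ ≤ dot a a + 1 := by
  have := dot_self_nonneg a
  rw [pi_norm_le_iff_of_nonneg (by linarith)]
  intro i
  have := sq_le_dot_self a i
  rw [Real.norm_eq_abs, abs_le]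
  constructor <;> nlinarith [sq_nonneg (a i - 1), sq_nonneg (a i + 1)]

lemma neg_dot_le {n : ℕ} (e f : Fin n → ℝ) : - dot e f ≤ ‖e‖ * ∑ i, |f i| := by
  unfold dot
  rw [← Finset.sum_neg_distrib, Finset.mul_sum]
  refine Finset.sum_le_sum fun i _ => ?_
  have h1 := norm_le_pi_norm e i
  rw [Real.norm_eq_abs] at h1
  calc -(e i * f i) ≤ |e i * f i| := neg_le_abs _
    _ = |e i| * |f i| := abs_mul _ _
    _ ≤ _ := mul_le_mul_of_nonneg_right h1 (abs_nonneg _)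

lemma exists_rep {n : ℕ} (V : Submodule ℝ (Fin n → ℝ)) (e : Fin n → ℝ) :
    ∃ v ∈ V, ∀ f ∈ V, dot v f = dot e f := by
  let B : (Fin n → ℝ) →ₗ[ℝ] (Fin n → ℝ) →ₗ[ℝ] ℝ :=
    LinearMap.mk₂ ℝ dot dot_add_left dot_smul_left (fun a b c => dot_add_right b c a)
      (fun t a b => dot_smul_right t b a)
  let T : V →ₗ[ℝ] Module.Dual ℝ V :=
    (LinearMap.lcomp ℝ ℝ V.subtype).comp (B.comp V.subtype)
  have hT : ∀ v f : V, T v f = dot (v : Fin n → ℝ) f := fun v f => rfl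
  have hinj : Function.Injective T := by
    rw [← LinearMap.ker_eq_bot, LinearMap.ker_eq_bot']
    intro v hv
    have : dot (v : Fin n → ℝ) v = 0 := by rw [← hT, hv]; rfl
    exact Subtype.ext (dot_self_eq_zero this.le)
  have hsurj : Function.Surjective T :=
    (LinearMap.injective_iff_surjective_of_finrank_eq_finrank
      (Subspace.dual_finrank_eq).symm).1 hinj
  obtain ⟨v, hv⟩ := hsurj ((B e).comp V.subtype)
  refine ⟨v, v.2, fun f hf => ?_⟩
  have := congrArg (fun φ => φ ⟨f, hf⟩) hv
  exact this

lemma sep {E ι : Type*} [AddCommGroup E] [Module ℝ E] [Fintype ι]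
    (s : Set E) (hne : s.Nonempty) (h : ι → E → ℝ) (hc : ∀ i, ConvexOn ℝ s (h i)) (c : ℝ)
    (hno : ∀ x ∈ s, ∃ i, c ≤ h i x) :
    ∃ l : ι → ℝ, (∀ i, 0 ≤ l i) ∧ ∑ i, l i = 1 ∧ ∀ x ∈ s, c ≤ ∑ i, l i * h i x := by
  classical
  obtain ⟨x0, hx0⟩ := hne
  let A : Set (ι → ℝ) := Set.pi Set.univ fun _ => Set.Iio c
  let C : Set (ι → ℝ) := {z | ∃ x ∈ s, ∀ i, h i x ≤ z i}
  have hA : Convex ℝ A := convex_pi fun i _ => convex_Iio c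
  have hAo : IsOpen A := isOpen_set_pi Set.finite_univ fun _ _ => isOpen_Iio
  have hC : Convex ℝ C := by
    rintro z ⟨x, hx, hxz⟩ z' ⟨x', hx', hxz'⟩ a b ha hb hab
    refine ⟨a • x + b • x', (hc (hno x0 hx0).choose).1 hx hx' ha hb hab, fun i => ?_⟩
    refine ((hc i).2 hx hx' ha hb hab).trans ?_
    simp only [smul_eq_mul, Pi.add_apply, Pi.smul_apply]
    exact add_le_add (mul_le_mul_of_nonneg_left (hxz i) ha)
      (mul_le_mul_of_nonneg_left (hxz' i) hb)
  have hdisj : Disjoint A C := by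
    rw [Set.disjoint_left]
    rintro z hz ⟨x, hx, hxz⟩
    obtain ⟨i, hi⟩ := hno x hx
    have : z i < c := hz i trivial
    linarith [hxz i]
  obtain ⟨φ, r, h1, h2⟩ := geometric_hahn_banach_open hA hAo hC hdisj
  let l : ι → ℝ := fun i => φ (Pi.single i 1)
  have hφ : ∀ z, φ z = ∑ i, l i * z i := by
    intro z
    conv_lhs => rw [pi_eq_sum_univ' z]
    rw [map_sum]
    refine Finset.sum_congr rfl fun i _ => ?_
    rw [map_smul, smul_eq_mul, mul_comm]
  have hCx : (fun i => h i x0) ∈ C := ⟨x0, hx0, fun i => le_rfl⟩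
  have hl : ∀ i, 0 ≤ l i := by
    intro i
    by_contra hneg
    push Not at hneg
    have key : ∀ t : ℝ, 0 ≤ t → r ≤ φ (fun i => h i x0) + t * l i := by
      intro t ht
      have := h2 ((fun i => h i x0) + t • Pi.single i 1) ⟨x0, hx0, fun j => by
        by_cases hij : j = i
        · subst hij; simpa using ht
        · simp [hij]⟩
      rw [map_add, map_smul] at this
      exact this
    have h3 := h2 _ hCx
    have := key ((φ (fun i => h i x0) - r + 1) / (-l i)) (div_nonneg (by linarith) (by linarith))
    have h4 : (φ (fun i => h i x0) - r + 1) / (-l i) * l i = -(φ (fun i => h i x0) - r + 1) := by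
      have := hneg.ne
      rw [div_neg, neg_mul, div_mul_cancel₀ _ this]
    linarith
  have hsum0 : 0 ≤ ∑ i, l i := Finset.sum_nonneg fun i _ => hl i
  have hcon : ∀ t : ℝ, t < c → t * ∑ i, l i < r := by
    intro t ht
    have := h1 (fun _ => t) (fun i _ => ht)
    rw [hφ, ← Finset.sum_mul] at this
    linarith
  have hpos : 0 < ∑ i, l i := by
    rcases hsum0.lt_or_eq with h | h
    · exact h
    · exfalso
      have h3 := hcon (c - 1) (by linarith)
      have h4 := h2 _ hCx
      have h5 : ∀ i, l i = 0 := by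
        intro i
        exact (Finset.sum_eq_zero_iff_of_nonneg (fun i _ => hl i)).1 h.symm i (Finset.mem_univ i)
      rw [hφ] at h4
      simp [h5] at h4
      rw [← h] at h3
      linarith
  have hcr : c * ∑ i, l i ≤ r := by
    by_contra hlt
    push Not at hlt
    have h3 : r / (∑ i, l i) < c := by rwa [div_lt_iff₀ hpos]
    have := hcon _ h3
    rw [div_mul_cancel₀ _ hpos.ne'] at this
    exact lt_irrefl _ this
  refine ⟨fun i => l i / ∑ j, l j, fun i => div_nonneg (hl i) hsum0, ?_, ?_⟩
  · rw [← Finset.sum_div, div_self hpos.ne']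
  · intro x hx
    have := h2 (fun i => h i x) ⟨x, hx, fun i => le_rfl⟩
    rw [hφ] at this
    have h3 : ∑ i, l i / (∑ j, l j) * h i x = (∑ i, l i * h i x) / ∑ j, l j := by
      rw [Finset.sum_div]
      exact Finset.sum_congr rfl fun i _ => by ring
    rw [h3, le_div_iff₀ hpos]
    linarith

abbrev Q (n m : ℕ) := (Fin n → ℝ) × (Fin n → ℝ) × (Fin m → ℝ) × (Fin m → ℝ)

noncomputable def hh {n m : ℕ} (w : Fin m → ℝ) (q : Q n m)
    (x : (Fin n → ℝ) × (Fin m → ℝ)) : ℝ :=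
  dot (x.1 - q.2.1) q.1 + dot (x.2 - w + q.2.2.2) (x.2 - q.2.2.1)

lemma hh_cont {n m : ℕ} (w : Fin m → ℝ) (q : Q n m) : Continuous (hh w q) := by
  unfold hh
  exact (continuous_dot (by fun_prop) (by fun_prop)).add
    (continuous_dot (by fun_prop) (by fun_prop))

lemma hh_conv {n m : ℕ} (w : Fin m → ℝ) (q : Q n m) (s : Set ((Fin n → ℝ) × (Fin m → ℝ)))
    (hs : Convex ℝ s) : ConvexOn ℝ s (hh w q) := by
  refine ⟨hs, ?_⟩
  rintro ⟨e, y⟩ - ⟨e', y'⟩ - a b ha hb hab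
  have hb' : b = 1 - a := by linarith
  have h0 := mul_nonneg (mul_nonneg ha hb) (dot_self_nonneg (y - y'))
  subst hb'
  simp only [hh, dot_sub_left, dot_sub_right, dot_add_left, dot_add_right, dot_smul_left,
    dot_smul_right, Prod.fst_add, Prod.snd_add, Prod.smul_fst, Prod.smul_snd, smul_eq_mul] at h0 ⊢
  rw [dot_comm y' y] at *
  nlinarith

lemma finite_step {n m : ℕ} {M : Set (Q n m)} (hM : MonoPH M) (V : Submodule ℝ (Fin n → ℝ))
    (hV : ∀ q ∈ M, q.1 ∈ V) (w : Fin m → ℝ) (t : Finset M) (c : ℝ) (hc : 0 < c) :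
    ∃ x : (Fin n → ℝ) × (Fin m → ℝ), x.1 ∈ V ∧ ∀ q ∈ t, hh w q.1 x ≤ c := by
  by_contra hcon
  push Not at hcon
  let s : Set ((Fin n → ℝ) × (Fin m → ℝ)) := {x | x.1 ∈ V}
  have hs : Convex ℝ s := by
    intro x hx y hy a b _ _ _
    exact V.add_mem (V.smul_mem a hx) (V.smul_mem b hy)
  obtain ⟨l, hl, hl1, hx⟩ := sep s ⟨0, V.zero_mem⟩ (fun q : t => hh w q.1.1)
    (fun q => hh_conv w _ s hs) c (fun x hx => by
      obtain ⟨q, hq, h⟩ := hcon x hx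
      exact ⟨⟨q, hq⟩, h.le⟩)
  let fb : Fin n → ℝ := ∑ q, l q • q.1.1.1
  let eb : Fin n → ℝ := ∑ q, l q • q.1.1.2.1
  let yb : Fin m → ℝ := ∑ q, l q • q.1.1.2.2.1
  let ub : Fin m → ℝ := ∑ q, l q • q.1.1.2.2.2
  have hdl : ∀ {k : ℕ} (g : t → Fin k → ℝ) (z : Fin k → ℝ),
      dot (∑ q, l q • g q) z = ∑ q, l q * dot (g q) z := by
    intro k g z
    let φ : (Fin k → ℝ) →+ ℝ := AddMonoidHom.mk' (fun a => dot a z) (fun a b => dot_add_left a b z)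
    have : φ (∑ q, l q • g q) = ∑ q, φ (l q • g q) := map_sum φ _ _
    refine this.trans (Finset.sum_congr rfl fun q _ => ?_)
    exact dot_smul_left _ _ _
  have hdr : ∀ {k : ℕ} (g : t → Fin k → ℝ) (z : Fin k → ℝ),
      dot z (∑ q, l q • g q) = ∑ q, l q * dot z (g q) := by
    intro k g z
    rw [dot_comm, hdl]
    exact Finset.sum_congr rfl fun q _ => by rw [dot_comm]
  have hfb : fb ∈ V := V.sum_mem fun q _ => V.smul_mem _ (hV _ q.1.2)
  obtain ⟨v, hv, hvf⟩ := exists_rep V eb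
  have hmono : dot eb fb + dot ub yb
      ≤ ∑ q, l q * (dot q.1.1.2.1 q.1.1.1 + dot q.1.1.2.2.2 q.1.1.2.2.1) := by
    set P : ℝ := ∑ q, l q * (dot q.1.1.2.1 q.1.1.1 + dot q.1.1.2.2.2 q.1.1.2.2.1) with hP
    have h0 : 0 ≤ ∑ p, ∑ q, l p * (l q * (dot (p.1.1.2.1 - q.1.1.2.1) (p.1.1.1 - q.1.1.1)
        + dot (p.1.1.2.2.2 - q.1.1.2.2.2) (p.1.1.2.2.1 - q.1.1.2.2.1))) :=
      Finset.sum_nonneg fun p _ => Finset.sum_nonneg fun q _ =>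
        mul_nonneg (hl p) (mul_nonneg (hl q) (hM _ _ _ _ _ _ _ _ p.1.2 q.1.2))
    have e1 : ∀ p : t, ∑ q, l p * (l q * (dot (p.1.1.2.1 - q.1.1.2.1) (p.1.1.1 - q.1.1.1)
        + dot (p.1.1.2.2.2 - q.1.1.2.2.2) (p.1.1.2.2.1 - q.1.1.2.2.1)))
        = l p * (dot p.1.1.2.1 p.1.1.1 + dot p.1.1.2.2.2 p.1.1.2.2.1)
          - l p * (dot p.1.1.2.1 fb) - l p * (dot p.1.1.2.2.2 yb)
          - l p * (dot eb p.1.1.1) - l p * (dot ub p.1.1.2.2.1) + l p * P := by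
      intro p
      have e2 : l p * (dot p.1.1.2.1 p.1.1.1 + dot p.1.1.2.2.2 p.1.1.2.2.1)
        = ∑ q, l p * (l q * (dot p.1.1.2.1 p.1.1.1 + dot p.1.1.2.2.2 p.1.1.2.2.1)) := by
        rw [← Finset.mul_sum, ← Finset.sum_mul, hl1, one_mul]
      rw [e2, hdr, hdr, hdl, hdl, hP]
      simp only [Finset.mul_sum, ← Finset.sum_sub_distrib, ← Finset.sum_add_distrib]
      refine Finset.sum_congr rfl fun q _ => ?_
      simp only [dot_sub_left, dot_sub_right]
      ring
    simp only [e1, Finset.sum_add_distrib, Finset.sum_sub_distrib] at h0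
    rw [← hdl (fun q => q.1.1.2.1) fb, ← hdl (fun q => q.1.1.2.2.2) yb,
      ← hdr (fun q => q.1.1.1) eb, ← hdr (fun q => q.1.1.2.2.1) ub, ← Finset.sum_mul, hl1] at h0
    change 0 ≤ P - dot eb fb - dot ub yb - dot eb fb - dot ub yb + 1 * P at h0
    linarith
  let y : Fin m → ℝ := (1 / 2 : ℝ) • (w - ub + yb)
  have hxx := hx (v, y) hv
  have e3 : ∑ q, l q * hh w q.1.1 (v, y) = dot v fb + dot (y - w) y - dot (y - w) yb + dot ub y
      - ∑ q, l q * (dot q.1.1.2.1 q.1.1.1 + dot q.1.1.2.2.2 q.1.1.2.2.1) := by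
    have e2 : dot (y - w) y = ∑ q, l q * dot (y - w) y := by
      rw [← Finset.sum_mul, hl1, one_mul]
    rw [e2, hdr, hdr, hdl]
    simp only [← Finset.sum_sub_distrib, ← Finset.sum_add_distrib]
    refine Finset.sum_congr rfl fun q _ => ?_
    simp only [hh, dot_sub_left, dot_sub_right, dot_add_left]
    ring
  rw [e3, hvf fb hfb] at hxx
  have h5 := dot_self_nonneg (y - w + ub)
  have h7 : dot (y - w + ub) (y - yb) = - dot (y - w + ub) (y - w + ub) := by
    have : y - yb = (-1 : ℝ) • (y - w + ub) := by
      funext i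
      simp [y]
      ring
    rw [this, dot_smul_right]; ring
  have h8 : dot (y - w + ub) (y - yb)
      = dot (y - w) y - dot (y - w) yb + dot ub y - dot ub yb := by
    simp only [dot_sub_left, dot_sub_right, dot_add_left]
    ring
  linarith

lemma hh_bound {n m : ℕ} (w : Fin m → ℝ) (q : Q n m) (x : (Fin n → ℝ) × (Fin m → ℝ)) :
    4 * hh w q x = 4 * dot (x.1 - q.2.1) q.1
      + dot ((2 : ℝ) • x.2 - (w - q.2.2.2 + q.2.2.1)) ((2 : ℝ) • x.2 - (w - q.2.2.2 + q.2.2.1))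
      - dot (q.2.2.2 + q.2.2.1 - w) (q.2.2.2 + q.2.2.1 - w) := by
  simp only [hh, dot, Finset.mul_sum, ← Finset.sum_add_distrib, ← Finset.sum_sub_distrib, mul_add]
  rw [add_sub_assoc, ← Finset.sum_sub_distrib]
  congr 1
  refine Finset.sum_congr rfl fun i _ => ?_
  simp
  ring

lemma exists_solution {n m : ℕ} {M : Set (Q n m)} (hM : MonoPH M) (V : Submodule ℝ (Fin n → ℝ))
    (hne : M.Nonempty) (hV : ∀ q ∈ M, q.1 ∈ V)
    (hd : ∀ d ∈ V, d ≠ 0 → ∃ q ∈ M, 0 < dot d q.1) (w : Fin m → ℝ) :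
    ∃ x : (Fin n → ℝ) × (Fin m → ℝ), ∀ q ∈ M, hh w q x ≤ 0 := by
  classical
  obtain ⟨q0, hq0⟩ := hne
  have hVc : IsClosed (V : Set (Fin n → ℝ)) := V.closed_of_finiteDimensional
  -- finite cover of the sphere
  have hK : IsCompact ((V : Set (Fin n → ℝ)) ∩ Metric.sphere 0 1) :=
    (isCompact_sphere 0 1).inter_left hVc
  obtain ⟨T, hT⟩ := hK.elim_finite_subcover
    (fun p : M × ℕ => {d : Fin n → ℝ | 1 / ((p.2 : ℝ) + 1) < dot d p.1.1.1})
    (fun p => isOpen_lt continuous_const (continuous_dot continuous_id continuous_const))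
    (by
      rintro d ⟨hdV, hdn⟩
      have : d ≠ 0 := by
        rintro rfl
        simp at hdn
      obtain ⟨q, hq, hpos⟩ := hd d hdV this
      obtain ⟨k, hk⟩ := exists_nat_one_div_lt hpos
      exact Set.mem_iUnion.2 ⟨(⟨q, hq⟩, k), hk⟩)
  let C : M → ℝ := fun q => 1 + dot q.1.2.1 q.1.1 +
    dot (q.1.2.2.2 + q.1.2.2.1 - w) (q.1.2.2.2 + q.1.2.2.1 - w)
  let R : ℝ := ∑ p ∈ T, |((p.2 : ℝ) + 1) * C p.1|
  have hR : 0 ≤ R := Finset.sum_nonneg fun p _ => abs_nonneg _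
  let t0 : Finset M := insert ⟨q0, hq0⟩ (T.image Prod.fst)
  have hbe : ∀ x : (Fin n → ℝ) × (Fin m → ℝ), x.1 ∈ V → (∀ q ∈ t0, hh w q.1 x ≤ 1) →
      ‖x.1‖ ≤ R := by
    intro x hx hq
    by_cases hx0 : x.1 = 0
    · rw [hx0, norm_zero]; exact hR
    have hnpos : 0 < ‖x.1‖ := norm_pos_iff.2 hx0
    have hmem : ‖x.1‖⁻¹ • x.1 ∈ (V : Set (Fin n → ℝ)) ∩ Metric.sphere 0 1 := by
      refine ⟨V.smul_mem _ hx, ?_⟩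
      rw [mem_sphere_zero_iff_norm, norm_smul, norm_inv, norm_norm, inv_mul_cancel₀ hnpos.ne']
    obtain ⟨p, hp⟩ := Set.mem_iUnion.1 (hT hmem)
    obtain ⟨hpT, hp⟩ := Set.mem_iUnion.1 hp
    have hp' : 1 / ((p.2 : ℝ) + 1) < dot (‖x.1‖⁻¹ • x.1) p.1.1.1 := hp
    rw [dot_smul_left, inv_mul_eq_div, div_lt_div_iff₀ (by positivity) hnpos] at hp'
    have h1 := hq p.1 (Finset.mem_insert_of_mem (Finset.mem_image_of_mem _ hpT))
    have h2 := hh_bound w p.1.1 x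
    have h3 := dot_self_nonneg
      ((2 : ℝ) • x.2 - (w - p.1.1.2.2.2 + p.1.1.2.2.1))
    have h3' := dot_self_nonneg (p.1.1.2.2.2 + p.1.1.2.2.1 - w)
    rw [dot_sub_left] at h2
    have h4 : dot x.1 p.1.1.1 ≤ C p.1 := by
      simp only [C]
      linarith
    have h5 : ((p.2 : ℝ) + 1) * C p.1 ≤ R :=
      (le_abs_self _).trans (Finset.single_le_sum (f := fun p : M × ℕ => |((p.2 : ℝ) + 1) * C p.1|)
        (fun p _ => abs_nonneg _) hpT)
    have h6 : (0 : ℝ) ≤ (p.2 : ℝ) + 1 := by positivity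
    have h7 := mul_le_mul_of_nonneg_left h4 h6
    linarith
  obtain ⟨R2, hR2⟩ : ∃ R2 : ℝ, ∀ x : (Fin n → ℝ) × (Fin m → ℝ), x.1 ∈ V →
      (∀ q ∈ t0, hh w q.1 x ≤ 1) → ‖x.2‖ ≤ R2 := by
    refine ⟨4 + 4 * (R * ∑ i, |q0.1 i|) + 4 * dot q0.2.1 q0.1 +
      dot (q0.2.2.2 + q0.2.2.1 - w) (q0.2.2.2 + q0.2.2.1 - w) + 1 +
      ‖w - q0.2.2.2 + q0.2.2.1‖, ?_⟩
    intro x hx hq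
    have h0 := hbe x hx hq
    have h1 := hq ⟨q0, hq0⟩ (Finset.mem_insert_self _ _)
    have h2 := hh_bound w q0 x
    have h3 := norm_le_dot_self ((2 : ℝ) • x.2 - (w - q0.2.2.2 + q0.2.2.1))
    have h4 := neg_dot_le x.1 q0.1
    have h5 : ‖x.1‖ * ∑ i, |q0.1 i| ≤ R * ∑ i, |q0.1 i| :=
      mul_le_mul_of_nonneg_right h0 (Finset.sum_nonneg fun i _ => abs_nonneg _)
    have h6 := norm_sub_norm_le ((2 : ℝ) • x.2) (w - q0.2.2.2 + q0.2.2.1)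
    rw [norm_smul, Real.norm_eq_abs, abs_two] at h6
    rw [dot_sub_left] at h2
    have h7 := norm_nonneg x.2
    change hh w q0 x ≤ 1 at h1
    linarith
  let B : Set ((Fin n → ℝ) × (Fin m → ℝ)) :=
    (Prod.fst ⁻¹' (V : Set (Fin n → ℝ))) ∩ Metric.closedBall 0 (max R R2)
  have hB : IsCompact B :=
    (isCompact_closedBall _ _).inter_left (hVc.preimage continuous_fst)
  obtain ⟨x, hxB, hx⟩ := hB.inter_iInter_nonempty
    (fun p : M × ℕ => {x | hh w p.1.1 x ≤ 1 / ((p.2 : ℝ) + 1)})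
    (fun p => isClosed_le (hh_cont w _) continuous_const)
    (by
      intro u
      let N : ℕ := u.sup Prod.snd
      obtain ⟨x, hxV, hx⟩ := finite_step hM V hV w (t0 ∪ u.image Prod.fst) (1 / ((N : ℝ) + 1))
        (by positivity)
      have hN1 : 1 / ((N : ℝ) + 1) ≤ 1 := by
        rw [div_le_one (by positivity)]
        have : (0 : ℝ) ≤ N := by positivity
        linarith
      have ht0 : ∀ q ∈ t0, hh w q.1 x ≤ 1 := fun q hq =>
        (hx q (Finset.mem_union_left _ hq)).trans hN1
      refine ⟨x, ⟨hxV, ?_⟩, ?_⟩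
      · rw [mem_closedBall_zero_iff, Prod.norm_def]
        exact max_le_max (hbe x hxV ht0) (hR2 x hxV ht0)
      · refine Set.mem_iInter₂.2 fun p hp => ?_
        refine (hx p.1 (Finset.mem_union_right _ (Finset.mem_image_of_mem _ hp))).trans ?_
        have : p.2 ≤ N := Finset.le_sup (f := Prod.snd) hp
        exact Nat.one_div_le_one_div this)
  refine ⟨x, fun q hq => ?_⟩
  rw [Set.mem_iInter] at hx
  by_contra hpos
  push Not at hpos
  obtain ⟨k, hk⟩ := exists_nat_one_div_lt hpos
  have : hh w q x ≤ 1 / ((k : ℝ) + 1) := hx (⟨q, hq⟩, k)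
  linarith

lemma mem_of_related {n m : ℕ} {M : Set (Q n m)} (hM : MaxMonoPH M) (p : Q n m)
    (h : ∀ q ∈ M, 0 ≤ dot (p.2.1 - q.2.1) (p.1 - q.1) + dot (p.2.2.2 - q.2.2.2)
      (p.2.2.1 - q.2.2.1)) : p ∈ M := by
  have hsw : ∀ {k : ℕ} (a b c d : Fin k → ℝ), dot (a - b) (c - d) = dot (b - a) (d - c) := by
    intro k a b c d
    simp only [dot_sub_left, dot_sub_right]; ring
  have : insert p M = M := by
    refine hM.2 _ ?_ (Set.subset_insert _ _)
    intro f e y u f' e' y' u' h1 h2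
    rcases h1 with h1 | h1 <;> rcases h2 with h2 | h2
    · have := h1.trans h2.symm
      simp only [Prod.mk.injEq] at this
      obtain ⟨rfl, rfl, rfl, rfl⟩ := this
      exact add_nonneg (by simp [dot]) (by simp [dot])
    · subst h1
      exact h _ h2
    · subst h2
      rw [hsw e, hsw u]
      exact h _ h1
    · exact hM.1 _ _ _ _ _ _ _ _ h1 h2
  rw [← this]
  exact Set.mem_insert _ _

lemma rint_dir {n : ℕ} (S : Set (Fin n → ℝ)) (h : (0 : Fin n → ℝ) ∈ rint S) :
    S.Nonempty ∧ ∃ V : Submodule ℝ (Fin n → ℝ), (∀ f ∈ S, f ∈ V) ∧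
      ∀ d ∈ V, d ≠ 0 → ∃ f ∈ S, 0 < dot d f := by
  have h0 : (0 : Fin n → ℝ) ∈ closure S := intrinsicInterior_subset h
  have h0' : (0 : Fin n → ℝ) ∈ affineSpan ℝ (closure S) := subset_affineSpan ℝ _ h0
  refine ⟨closure_nonempty_iff.1 ⟨0, h0⟩, (affineSpan ℝ (closure S)).direction, ?_, ?_⟩
  · intro f hf
    have := AffineSubspace.vsub_mem_direction (subset_affineSpan ℝ _ (subset_closure hf)) h0'
    simpa using this
  · intro d hd hd0
    by_contra hcon
    push Not at hcon
    have hcl : ∀ f ∈ closure S, dot d f ≤ 0 := fun f hf =>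
      closure_minimal (t := {f | dot d f ≤ 0}) hcon
        (isClosed_le (continuous_dot continuous_const continuous_id) continuous_const) hf
    unfold rint at h
    rw [mem_intrinsicInterior] at h
    obtain ⟨z, hz, hz0⟩ := h
    have hmem : ∀ t : ℝ, t • d ∈ affineSpan ℝ (closure S) := by
      intro t
      have := AffineSubspace.vadd_mem_of_mem_direction
        (Submodule.smul_mem _ t hd) h0'
      simpa using this
    let g : ℝ → affineSpan ℝ (closure S) := fun t => ⟨t • d, hmem t⟩
    have hg : Continuous g := by
      refine Continuous.subtype_mk ?_ _
      fun_prop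
    have hg0 : g 0 = z := Subtype.ext (by simp [g, hz0])
    have hev : ∀ᶠ t in nhds (0 : ℝ), g t ∈ interior ((↑) ⁻¹' closure S) :=
      hg.continuousAt.eventually_mem (by
        rw [hg0]; exact isOpen_interior.mem_nhds hz)
    obtain ⟨ε, hε, hball⟩ := Metric.eventually_nhds_iff.1 hev
    have hm := interior_subset (hball (y := ε / 2) (by
      rw [Real.dist_eq, sub_zero, abs_of_pos (by linarith)]; linarith))
    have h1 : (ε / 2) • d ∈ closure S := hm
    have h2 := hcl _ h1
    rw [dot_smul_right] at h2
    have h3 : dot d d ≤ 0 := by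
      by_contra hlt
      push Not at hlt
      have := mul_pos (half_pos hε) hlt
      linarith
    exact hd0 (dot_self_eq_zero h3)

end SteadyAux

/-- Under conditions (s1) `0 ∈ rint Π(M, F_S)` and (s2)
`∃ ē ∈ rint {e_S : (0, e_S) ∈ Π(M, F_S × E_S)}`, the steady-state relation
`M_s = {(y,u) : ∃ e_S, (0, e_S, y, u) ∈ M}` of a maximal monotone relation
`M` is maximal monotone. -/
theorem steadyState_maxMonotone {n m : ℕ}
    (M : Set ((Fin n → ℝ) × (Fin n → ℝ) × (Fin m → ℝ) × (Fin m → ℝ)))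
    (hM : MaxMonoPH M)
    (hs1 : (0 : Fin n → ℝ) ∈ rint {fS : Fin n → ℝ | ∃ eS y u, (fS, eS, y, u) ∈ M})
    (hs2 : ∃ ebar : Fin n → ℝ,
      ebar ∈ rint {eS : Fin n → ℝ | ∃ y u, ((0 : Fin n → ℝ), eS, y, u) ∈ M}) :
    MaxMono2 {p : (Fin m → ℝ) × (Fin m → ℝ) | ∃ eS : Fin n → ℝ,
      ((0 : Fin n → ℝ), eS, p.1, p.2) ∈ M} := by
  refine ⟨?_, ?_⟩
  · rintro ⟨y, u⟩ ⟨e, he⟩ ⟨y', u'⟩ ⟨e', he'⟩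
    have h := hM.1 _ _ _ _ _ _ _ _ he he'
    have h0 : dot (e - e') ((0 : Fin n → ℝ) - 0) = 0 := by simp [dot]
    rw [h0, zero_add] at h
    exact h
  · intro M' hM' hsub
    refine Set.Subset.antisymm ?_ hsub
    rintro ⟨y0, u0⟩ hp
    obtain ⟨⟨f0, e0, y1, u1, hq0⟩, V, hV, hd⟩ := SteadyAux.rint_dir _ hs1
    obtain ⟨⟨e, y⟩, hx⟩ := SteadyAux.exists_solution hM.1 V ⟨_, hq0⟩
      (fun q hq => hV _ ⟨q.2.1, q.2.2.1, q.2.2.2, hq⟩)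
      (fun d hdV hd0 => by
        obtain ⟨f, ⟨e, y, u, hf⟩, hpos⟩ := hd d hdV hd0
        exact ⟨_, hf, hpos⟩) (y0 + u0)
    have hmem : ((0 : Fin n → ℝ), e, y, y0 + u0 - y) ∈ M := by
      refine SteadyAux.mem_of_related hM _ fun q hq => ?_
      have := hx q hq
      simp only [SteadyAux.hh, SteadyAux.dot_sub_left, SteadyAux.dot_sub_right,
        SteadyAux.dot_add_left, SteadyAux.dot_add_right] at this ⊢
      have hz : ∀ a : Fin n → ℝ, dot a 0 = 0 := fun a => by simp [dot]
      rw [hz, hz]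
      linarith
    have hm := hM' _ hp _ (hsub (show (y, y0 + u0 - y) ∈ _ from ⟨e, hmem⟩))
    have h1 : dot (y0 - y) (y0 - y) ≤ 0 := by
      simp only [SteadyAux.dot_sub_left, SteadyAux.dot_sub_right,
        SteadyAux.dot_add_left, SteadyAux.dot_add_right] at hm ⊢
      linarith
    have h2 : y0 = y := sub_eq_zero.1 (SteadyAux.dot_self_eq_zero h1)
    subst h2
    refine ⟨e, ?_⟩
    simpa using hmem
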